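/- Let G be an interval graph with interval representation I and right-endpoint ordering σ, and let S ⊆ V be a set such that I[S] is a proper interval representation of G[S]. Let P be a normal path of G and u,v ∈ S ∩ V(P). If u <_σ v, then u <_P v. -/

import Mathlib

/-- `p` is a normal path of the interval graph `G` with right-endpoint function `r`:
it is a path (consecutive vertices adjacent, no repeated vertex), its first vertex is
the leftmost vertex of the path in the right-endpoint ordering, and each vertex `p[i+1]`
is the leftmost (in the right-endpoint ordering) vertex among the later path vertices
that are adjacent to `p[i]`. -/
def IsNormalPath {V : Type*} (G : SimpleGraph V) (r : V → ℝ) (p : List V) : Prop :=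
  p.Chain' G.Adj ∧ p.Nodup ∧
  (∀ (h : p ≠ []), ∀ v ∈ p, r (p.head h) ≤ r v) ∧
  (∀ i j : ℕ, ∀ (hi : i + 1 < p.length) (hj : j < p.length), i + 1 ≤ j →
    G.Adj (p[i]'(by omega)) (p[j]'hj) → r (p[i+1]'hi) ≤ r (p[j]'hj))

/-- `u` occurs strictly before `w` on the list `p`. -/
def Before {V : Type*} (p : List V) (u w : V) : Prop :=
  ∃ q1 q2 q3 : List V, p = q1 ++ u :: q2 ++ w :: q3

/-!
Compare a vertex `x` of a normal path with a later vertex `y`. By induction along the path, either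
`r x ≤ r y` or `l x < l y`. The first vertex is leftmost. If the claim holds for `x`, then in both
cases `l x ≤ r y`; so either `x` meets `y`, and normality gives `r x' ≤ r y` for the successor `x'`
of `x`, or `I_x` ends before `I_y` begins, and then `l x' ≤ r x < l y`. Hence a later vertex with a
smaller right endpoint has its interval inside the earlier one, which properness forbids.
-/

/-- `G` is the interval graph of the closed intervals `[l v, r v]`. The intervals may be single
points and may share endpoints. -/
structure IsIntervalRepresentation {V : Type*} (G : SimpleGraph V) (l r : V → ℝ) : Prop where
  left_le_right (v : V) : l v ≤ r v
  adj_iff (u v : V) : G.Adj u v ↔ u ≠ v ∧ l u ≤ r v ∧ l v ≤ r u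

section Before

variable {V : Type*} {p : List V} {u v : V}

theorem before_or_before_of_mem (hu : u ∈ p) (hv : v ∈ p) (huv : u ≠ v) :
    Before p u v ∨ Before p v u := by
  obtain ⟨s, t, rfl⟩ := List.mem_iff_append.mp hv
  rcases List.mem_append.mp hu with hs | ht
  · obtain ⟨s₁, s₂, rfl⟩ := List.mem_iff_append.mp hs
    exact Or.inl ⟨s₁, s₂, t, rfl⟩
  · obtain ⟨t₁, t₂, rfl⟩ := List.mem_iff_append.mp (List.mem_of_ne_of_mem huv ht)
    exact Or.inr ⟨s, t₁, t₂, by simp only [List.append_assoc, List.cons_append]⟩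

theorem Before.rel_of_pairwise {R : V → V → Prop} (h : Before p u v) (hp : p.Pairwise R) :
    R u v := by
  obtain ⟨q₁, q₂, q₃, rfl⟩ := h
  exact (List.pairwise_append.mp hp).2.2 u (by simp) v List.mem_cons_self

end Before

namespace IsNormalPath

variable {V : Type*} {G : SimpleGraph V} {l r : V → ℝ} {p : List V}

theorem right_getElem_zero_le (hp : IsNormalPath G r p) {j : ℕ} (hj : j < p.length) :
    r p[0] ≤ r p[j] := by
  rw [← List.head_eq_getElem (List.ne_nil_of_length_pos (Nat.zero_lt_of_lt hj))]
  exact hp.2.2.1 _ _ (List.getElem_mem hj)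

theorem right_succ_le_or_left_succ_lt (hI : IsIntervalRepresentation G l r)
    (hp : IsNormalPath G r p) {i j : ℕ} (hij : i < j) (hj : j < p.length)
    (hle : l p[i] ≤ r p[j]) : r p[i + 1] ≤ r p[j] ∨ l p[i + 1] < l p[j] := by
  obtain ⟨hchain, hnodup, -, hleftmost⟩ := hp
  have hi : i + 1 < p.length := by lia
  rcases le_or_gt (l p[j]) (r p[i]) with hmeet | hbefore
  · have hne : p[i] ≠ p[j] := fun h => hij.ne (hnodup.getElem_inj_iff.mp h)
    exact Or.inl (hleftmost i j hi hj hij ((hI.adj_iff _ _).mpr ⟨hne, hle, hmeet⟩))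
  · have hadj : G.Adj p[i] p[i + 1] := List.isChain_iff_getElem.mp hchain i hi
    exact Or.inr (((hI.adj_iff _ _).mp hadj).2.2.trans_lt hbefore)

theorem pairwise_right_le_or_left_lt (hI : IsIntervalRepresentation G l r)
    (hp : IsNormalPath G r p) : p.Pairwise fun x y => r x ≤ r y ∨ l x < l y := by
  refine List.pairwise_iff_getElem.mpr fun i j _ hj hij => ?_
  induction i with
  | zero => exact Or.inl (hp.right_getElem_zero_le hj)
  | succ i ih =>
    have hle : l p[i] ≤ r p[j] := by
      rcases ih (by lia) (by lia) with hr | hl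
      · exact (hI.left_le_right _).trans hr
      · exact hl.le.trans (hI.left_le_right _)
    exact hp.right_succ_le_or_left_succ_lt hI (by lia) hj hle

end IsNormalPath

theorem stmt4_general {V : Type*} {G : SimpleGraph V} {l r : V → ℝ}
    (hI : IsIntervalRepresentation G l r) {p : List V} (hp : IsNormalPath G r p) {u v : V}
    (hu : u ∈ p) (hv : v ∈ p) (hsub : ¬ Set.Icc (l u) (r u) ⊆ Set.Icc (l v) (r v))
    (hr : r u < r v) : Before p u v := by
  have hne : u ≠ v := ne_of_apply_ne r hr.ne
  refine (before_or_before_of_mem hu hv hne).resolve_right fun hvu => ?_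
  rcases hvu.rel_of_pairwise (hp.pairwise_right_le_or_left_lt hI) with hle | hlt
  · exact hle.not_gt hr
  · exact hsub (Set.Icc_subset_Icc hlt.le hr.le)

theorem stmt4 {V : Type*} [Fintype V]
    (G : SimpleGraph V) (l r : V → ℝ)
    (hlr : ∀ v : V, l v < r v)
    (hinjl : Function.Injective l) (hinjr : Function.Injective r)
    (hlrne : ∀ u v : V, l u ≠ r v)
    (hadj : ∀ u v : V, G.Adj u v ↔ u ≠ v ∧ l u ≤ r v ∧ l v ≤ r u)
    (S : Set V)
    (hSproper : ∀ x ∈ S, ∀ y ∈ S, x ≠ y →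
      ¬ Set.Icc (l x) (r x) ⊆ Set.Icc (l y) (r y))
    (p : List V) (hnp : IsNormalPath G r p)
    (u v : V) (huS : u ∈ S) (hvS : v ∈ S) (hup : u ∈ p) (hvp : v ∈ p)
    (hsigma : r u < r v) :
    Before p u v := by
  have hI : IsIntervalRepresentation G l r := ⟨fun w => (hlr w).le, hadj⟩
  exact stmt4_general hI hnp hup hvp (hSproper u huS v hvS (ne_of_apply_ne r hsigma.ne)) hsigma
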